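/- For every even integer n ≥ 4, the set of values of the permanent on Λ̂_n(−1,2,1) equals {4^j : 1 ≤ j ≤ ⌊n/4⌋}, and for every odd integer n ≥ 3 it equals {2·4^j : 0 ≤ j ≤ ⌊(n−3)/4⌋}. -/

import Mathlib

open Matrix

/-- `Λ̂_n(α,β,γ)`: matrices `α·Sᵀ + β·I + γ·S` where `S` is the permutation matrix of a
permutation of `{1,…,n}` all of whose cycles have length at least 3 (note `Sᵀ = S⁻¹`). -/
def LambdaHat (n : ℕ) (α β γ : ℝ) : Set (Matrix (Fin n) (Fin n) ℝ) :=
  {A | ∃ s : Equiv.Perm (Fin n), (∀ x, s x ≠ x ∧ s (s x) ≠ x) ∧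
    A = α • ((s⁻¹).permMatrix ℝ) + β • (1 : Matrix (Fin n) (Fin n) ℝ) + γ • (s.permMatrix ℝ)}

/-- Laplace expansion of the permanent along the first column. -/
theorem permanent_succ_column_zero {R : Type*} [CommSemiring R] {n : ℕ}
    (A : Matrix (Fin (n + 1)) (Fin (n + 1)) R) :
    A.permanent = ∑ i, A i 0 * (A.submatrix i.succAbove Fin.succ).permanent := by
  rw [permanent, Finset.univ_perm_fin_succ, ← Finset.univ_product_univ]
  simp only [Finset.sum_map, Equiv.toEmbedding_apply, Finset.sum_product]
  refine Finset.sum_congr rfl fun i _ => Fin.cases ?_ (fun i => ?_) i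
  · simp [Fin.prod_univ_succ, permanent, Finset.mul_sum]
  · rw [← permanent_permute_cols i.cycleRange, permanent, Finset.mul_sum]
    simp [Fin.prod_univ_succ, Fin.succAbove_cycleRange]

/-- The permanent of the leading `n × n` block of an infinite matrix. -/
noncomputable def leadingPermanent (n : ℕ) (f : ℕ → ℕ → ℝ) : ℝ :=
  (Matrix.of fun i j : Fin n => f i j).permanent

theorem leadingPermanent_zero (f : ℕ → ℕ → ℝ) : leadingPermanent 0 f = 1 :=
  permanent_isEmpty

theorem leadingPermanent_congr {n : ℕ} {f g : ℕ → ℕ → ℝ}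
    (h : ∀ i j, i < n → j < n → f i j = g i j) : leadingPermanent n f = leadingPermanent n g := by
  unfold leadingPermanent
  congr 1
  ext i j
  exact h i j i.2 j.2

theorem leadingPermanent_transpose (n : ℕ) (f : ℕ → ℕ → ℝ) :
    leadingPermanent n (fun i j => f j i) = leadingPermanent n f :=
  permanent_transpose (Matrix.of fun i j : Fin n => f i j)

theorem leadingPermanent_succ_col (n : ℕ) (f : ℕ → ℕ → ℝ) :
    leadingPermanent (n + 1) f = ∑ i ∈ Finset.range (n + 1),
      f i 0 * leadingPermanent n (fun a b => f (if a < i then a else a + 1) (b + 1)) := by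
  rw [leadingPermanent, permanent_succ_column_zero, Finset.sum_range]
  refine Finset.sum_congr rfl fun i _ => ?_
  simp only [of_apply, Fin.val_zero, leadingPermanent]
  congr 2
  ext a b
  simp only [submatrix_apply, of_apply, Fin.val_succ, Fin.succAbove, Fin.lt_def, Fin.val_castSucc]
  split_ifs <;> simp

theorem leadingPermanent_succ_row (n : ℕ) (f : ℕ → ℕ → ℝ) :
    leadingPermanent (n + 1) f = ∑ j ∈ Finset.range (n + 1),
      f 0 j * leadingPermanent n (fun a b => f (a + 1) (if b < j then b else b + 1)) := by
  rw [← leadingPermanent_transpose, leadingPermanent_succ_col]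
  refine Finset.sum_congr rfl fun i _ => ?_
  rw [← leadingPermanent_transpose]

theorem leadingPermanent_lowerTriangular {d : ℝ} {n : ℕ} {f : ℕ → ℕ → ℝ} (hd : ∀ i < n, f i i = d)
    (h : ∀ i j, i < j → j < n → f i j = 0) : leadingPermanent n f = d ^ n := by
  induction n generalizing f with
  | zero => exact leadingPermanent_zero f
  | succ n ih =>
    rw [leadingPermanent_succ_row, Finset.sum_eq_single_of_mem 0 (by simp)
      fun j hj hj0 => by rw [h 0 j (by omega) (by simpa using hj), zero_mul], hd 0 n.succ_pos, pow_succ']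
    congr 1
    exact ih (fun i hi => by simpa using hd (i + 1) (by omega)) fun i j hij hj => by simpa using h _ _ (by omega) (by omega)

theorem leadingPermanent_upperTriangular {d : ℝ} {n : ℕ} {f : ℕ → ℕ → ℝ} (hd : ∀ i < n, f i i = d)
    (h : ∀ i j, j < i → i < n → f i j = 0) : leadingPermanent n f = d ^ n := by
  rw [← leadingPermanent_transpose]
  exact leadingPermanent_lowerTriangular hd fun i j => h j i

/-- The entries of the infinite tridiagonal matrix with bands `-1, 2, 1`. -/
noncomputable def tridiag (i j : ℕ) : ℝ :=
  if i = j then 2 else if j = i + 1 then 1 else if i = j + 1 then -1 else 0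

theorem leadingPermanent_tridiag_succ_succ (n : ℕ) :
    leadingPermanent (n + 2) tridiag =
      2 * leadingPermanent (n + 1) tridiag - leadingPermanent n tridiag := by
  have h₀ : leadingPermanent (n + 1)
      (fun a b => tridiag (if a < 0 then a else a + 1) (b + 1)) =
      leadingPermanent (n + 1) tridiag :=
    leadingPermanent_congr fun i j _ _ => by simp [tridiag]
  have h₁ : leadingPermanent (n + 1)
      (fun a b => tridiag (if a < 1 then a else a + 1) (b + 1)) =
      leadingPermanent n tridiag := by
    rw [leadingPermanent_succ_row, Finset.sum_range_succ', Finset.sum_eq_zero]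
    · simp [tridiag]
      exact leadingPermanent_congr fun i j _ _ => by simp [tridiag]
    · intro j _
      simp [tridiag]
  rw [leadingPermanent_succ_col, Finset.sum_range_succ', Finset.sum_range_succ',
    Finset.sum_eq_zero]
  · rw [h₀, zero_add, h₁]
    simp [tridiag]
    ring
  · intro j _
    simp [tridiag]

theorem leadingPermanent_tridiag (n : ℕ) : leadingPermanent n tridiag = n + 1 := by
  induction n using Nat.twoStepInduction with
  | zero => simp [leadingPermanent_zero]
  | one => norm_num [leadingPermanent_succ_col, leadingPermanent_zero, tridiag]
  | more n h₀ h₁ =>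
    rw [leadingPermanent_tridiag_succ_succ, h₀, h₁]
    push_cast
    ring

/-- The tridiagonal bands `-1, 2, 1` closed up cyclically on `{0, …, k + 2}`. -/
noncomputable def cyclicTridiag (k i j : ℕ) : ℝ :=
  if i = j then 2 else if j = i + 1 ∨ i = k + 2 ∧ j = 0 then 1
  else if i = j + 1 ∨ j = k + 2 ∧ i = 0 then -1 else 0

theorem leadingPermanent_cyclicTridiag (k : ℕ) :
    leadingPermanent (k + 3) (cyclicTridiag k) = 3 + (-1) ^ (k + 3) := by
  have h₀ : leadingPermanent (k + 2)
      (fun a b => cyclicTridiag k (if a < 0 then a else a + 1) (b + 1)) = k + 3 := by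
    rw [leadingPermanent_congr (g := tridiag), leadingPermanent_tridiag]
    · push_cast; ring
    · intro i j _ _
      simp [tridiag, cyclicTridiag]
  have h₁ : leadingPermanent (k + 2)
      (fun a b => cyclicTridiag k (if a < 1 then a else a + 1) (b + 1)) =
      k + 2 - (-1) ^ (k + 1) := by
    rw [leadingPermanent_succ_row, Finset.sum_range_succ, Finset.sum_range_succ',
      Finset.sum_eq_zero, leadingPermanent_congr (n := k + 1) (g := tridiag),
      leadingPermanent_tridiag, leadingPermanent_upperTriangular (d := -1)]
    · simp [cyclicTridiag]
      ring
    · intros; grind [cyclicTridiag, tridiag]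
    · intros; grind [cyclicTridiag, tridiag]
    · intros; grind [cyclicTridiag, tridiag]
    · intros; grind [cyclicTridiag, tridiag]
  have h₂ : leadingPermanent (k + 2)
      (fun a b => cyclicTridiag k (if a < k + 2 then a else a + 1) (b + 1)) =
      1 - (k + 2) := by
    rw [leadingPermanent_succ_row, Finset.sum_range_succ, Finset.sum_range_succ',
      Finset.sum_eq_zero, leadingPermanent_lowerTriangular (d := 1),
      leadingPermanent_congr (n := k + 1) (g := tridiag),
      leadingPermanent_tridiag]
    · simp [cyclicTridiag]
      ring
    · intros; grind [cyclicTridiag, tridiag]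
    · intros; grind [cyclicTridiag, tridiag]
    · intros; grind [cyclicTridiag, tridiag]
    · intros; grind [cyclicTridiag, tridiag]
  rw [leadingPermanent_succ_col, Finset.sum_range_succ, Finset.sum_range_succ',
    Finset.sum_range_succ', Finset.sum_eq_zero]
  · rw [h₀, zero_add, h₁, h₂]
    simp [cyclicTridiag]
    ring
  · intro j hj
    rw [Finset.mem_range] at hj
    simp [cyclicTridiag]
    omega

theorem permanent_fromBlocks_zero_zero {R m n : Type*} [CommSemiring R] [Fintype m] [Fintype n]
    [DecidableEq m] [DecidableEq n] (A : Matrix m m R) (D : Matrix n n R) :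
    (Matrix.fromBlocks A 0 0 D).permanent = A.permanent * D.permanent := by
  classical
  unfold permanent
  rw [Finset.sum_mul_sum, ← Finset.sum_product', Finset.univ_product_univ]
  symm
  refine Finset.sum_of_injOn (Equiv.Perm.sumCongrHom m n)
    (Equiv.Perm.sumCongrHom_injective.injOn) (fun _ _ => Finset.mem_coe.2 (Finset.mem_univ _))
    ?_ ?_
  · intro σ _ hσ
    have h : ¬ Set.MapsTo σ (Set.range Sum.inl) (Set.range Sum.inl) := fun h => hσ <| by
      obtain ⟨τ, hτ⟩ := Equiv.Perm.mem_sumCongrHom_range_of_perm_mapsTo_inl h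
      exact ⟨τ, by simp, hτ⟩
    simp only [Set.MapsTo, Set.mem_range, forall_exists_index, forall_apply_eq_imp_iff,
      not_forall] at h
    obtain ⟨a, ha⟩ := h
    refine Finset.prod_eq_zero (Finset.mem_univ (Sum.inl a)) ?_
    rcases hx : σ (Sum.inl a) with b | b
    · exact absurd ⟨b, hx.symm⟩ ha
    · simp
  · intro σ _
    simp [Fintype.prod_sum_type]

/-- The matrix `-S⁻¹ + 2I + S` attached to a permutation matrix `S`. -/
noncomputable def permBand {α : Type*} [DecidableEq α] (s : Equiv.Perm α) : Matrix α α ℝ :=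
  (-1 : ℝ) • ((s⁻¹).permMatrix ℝ) + (2 : ℝ) • (1 : Matrix α α ℝ) + (1 : ℝ) • (s.permMatrix ℝ)

theorem permBand_apply {α : Type*} [DecidableEq α] (s : Equiv.Perm α) (i j : α) :
    permBand s i j =
      (if i = j then 2 else 0) + (if s i = j then 1 else 0) - (if s j = i then 1 else 0) := by
  have h : s.symm i = j ↔ s j = i := by rw [Equiv.symm_apply_eq, eq_comm]
  simp [permBand, Equiv.Perm.permMatrix, PEquiv.toMatrix_apply, Matrix.one_apply, h]
  ring

theorem permanent_permBand_congr {α β : Type*} [DecidableEq α] [DecidableEq β] [Fintype α]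
    [Fintype β] {s : Equiv.Perm α} {t : Equiv.Perm β} (e : α ≃ β)
    (h : ∀ a, e (s a) = t (e a)) : (permBand s).permanent = (permBand t).permanent := by
  unfold permanent
  refine Fintype.sum_equiv e.permCongr _ _ fun σ => ?_
  refine Fintype.prod_equiv e _ _ fun i => ?_
  simp [permBand_apply, ← h]

theorem permanent_permBand_sumCongr {α β : Type*} [DecidableEq α] [DecidableEq β] [Fintype α]
    [Fintype β] (s : Equiv.Perm α) (t : Equiv.Perm β) :
    (permBand (s.sumCongr t)).permanent = (permBand s).permanent * (permBand t).permanent := by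
  rw [← permanent_fromBlocks_zero_zero]
  congr 1
  ext (i | i) (j | j) <;> simp [permBand_apply]

theorem permanent_permBand_finRotate (k : ℕ) :
    (permBand (finRotate (k + 3))).permanent = 3 + (-1) ^ (k + 3) := by
  rw [← leadingPermanent_cyclicTridiag]
  unfold leadingPermanent
  congr 1
  ext i j
  rw [of_apply]
  simp only [permBand_apply, cyclicTridiag, Fin.ext_iff, coe_finRotate, Fin.val_last]
  have hi := i.2
  have hj := j.2
  grind

/-- A permutation all of whose cycles have length at least three. -/
def LongCycles {α : Type*} (s : Equiv.Perm α) : Prop := ∀ x, s x ≠ x ∧ s (s x) ≠ x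

theorem LongCycles.three_le_card {α : Type*} [Fintype α] [Nonempty α] {s : Equiv.Perm α}
    (hs : LongCycles s) : 3 ≤ Fintype.card α := by
  classical
  obtain ⟨x⟩ := ‹Nonempty α›
  have h := Finset.card_le_univ {x, s x, s (s x)}
  rwa [Finset.card_eq_three.2 ⟨x, s x, s (s x), (hs x).1.symm, (hs x).2.symm, (hs (s x)).1.symm,
    rfl⟩] at h

theorem permanent_permBand_of_sameCycle {α : Type*} [DecidableEq α] [Fintype α] [Nonempty α]
    {s : Equiv.Perm α} (hs : LongCycles s) (hcyc : ∀ x y, s.SameCycle x y) :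
    (permBand s).permanent = 3 + (-1) ^ Fintype.card α := by
  obtain ⟨k, hk⟩ := Nat.exists_eq_add_of_le' hs.three_le_card
  obtain ⟨x⟩ := ‹Nonempty α›
  rw [hk, ← permanent_permBand_finRotate]
  let e := Fintype.equivFinOfCardEq hk
  have he : ∀ y, e.permCongr s (e y) = e (s y) := by simp
  have hne : ∀ y, e.permCongr s y ≠ y := fun y => by
    obtain ⟨y, rfl⟩ := e.surjective y
    simpa using (hs y).1
  have hcycle : (e.permCongr s).IsCycle := by
    refine ⟨e x, hne _, fun y _ => ?_⟩
    obtain ⟨y, rfl⟩ := e.surjective y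
    obtain ⟨i, rfl⟩ := hcyc x y
    refine ⟨i, ?_⟩
    have := map_zpow e.permCongrHom s i
    simp only [Equiv.permCongrHom_coe] at this
    rw [← this]
    simp
  have hsupp : (e.permCongr s).support = Finset.univ :=
    Finset.eq_univ_of_forall fun y => Equiv.Perm.mem_support.2 (hne y)
  obtain ⟨g, hg⟩ := isConj_iff.1 (hcycle.isConj (isCycle_finRotate (n := k + 1))
    (by rw [hsupp, support_finRotate]))
  refine permanent_permBand_congr (e.trans g) fun y => ?_
  rw [← hg]
  simp

/-- Each even cycle contributes a factor `4` to the permanent and each odd cycle a factor `2`; here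
`e` and `o` count the even and the odd cycles. -/
theorem LongCycles.exists_permanent_eq (n : ℕ) : ∀ {α : Type} [DecidableEq α] [Fintype α]
    {s : Equiv.Perm α}, LongCycles s → Fintype.card α = n →
    ∃ e o : ℕ, (permBand s).permanent = 4 ^ e * 2 ^ o ∧ 4 * e + 3 * o ≤ n ∧ o % 2 = n % 2 ∧
      (0 < n → 0 < e + o) := by
  induction n using Nat.strong_induction_on with
  | _ n ih =>
  intro α _ _ s hs hn
  classical
  rcases isEmpty_or_nonempty α with hα | ⟨⟨x⟩⟩
  · have : n = 0 := by rw [← hn, Fintype.card_eq_zero]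
    exact ⟨0, 0, by simp [permanent_isEmpty], by omega, by omega, by omega⟩
  have hp : ∀ y, s.SameCycle x (s y) ↔ s.SameCycle x y := fun y => Equiv.Perm.sameCycle_apply_right
  have hq : ∀ y, ¬ s.SameCycle x (s y) ↔ ¬ s.SameCycle x y := fun y => not_congr (hp y)
  have hmul : (permBand s).permanent =
      (permBand (s.subtypePerm hp)).permanent * (permBand (s.subtypePerm (p := fun y => ¬ s.SameCycle x y) hq)).permanent := by
    rw [← permanent_permBand_sumCongr]
    refine (permanent_permBand_congr (Equiv.sumCompl _) ?_).symm
    rintro (a | a) <;> simp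
  have hcard := Fintype.card_congr (Equiv.sumCompl (s.SameCycle x))
  rw [Fintype.card_sum, hn] at hcard
  have hp₃ : LongCycles (s.subtypePerm hp) := fun y => by
    simpa [Subtype.ext_iff] using hs y
  have hq₃ : LongCycles (s.subtypePerm (p := fun y => ¬ s.SameCycle x y) hq) := fun y => by
    simpa [Subtype.ext_iff] using hs y
  have : Nonempty {y // s.SameCycle x y} := ⟨⟨x, .refl _ _⟩⟩
  have h₃ := hp₃.three_le_card
  have hcyc := permanent_permBand_of_sameCycle hp₃
    fun y z => Equiv.Perm.sameCycle_subtypePerm.2 (y.2.symm.trans z.2)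
  obtain ⟨e, o, h, hle, hpar, -⟩ := ih _ (by omega) hq₃ rfl
  rw [h, hcyc] at hmul
  rcases Nat.even_or_odd (Fintype.card {y // s.SameCycle x y}) with hev | hodd
  · refine ⟨e + 1, o, ?_, ?_, ?_, by omega⟩
    · rw [hmul, hev.neg_one_pow]; ring
    · have := hev.two_dvd; omega
    · have := hev.two_dvd; omega
  · refine ⟨e, o + 1, ?_, by omega, ?_, by omega⟩
    · rw [hmul, hodd.neg_one_pow]; ring
    · have := Nat.odd_iff.1 hodd; omega

theorem longCycles_finRotate (k : ℕ) : LongCycles (finRotate (k + 3)) := by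
  intro x
  have := x.2
  simp only [ne_eq, Fin.ext_iff, coe_finRotate, Fin.val_last]
  grind

theorem exists_longCycles_permanent_eq (j m : ℕ) (hm : 3 ≤ m) :
    ∃ s : Equiv.Perm (Fin (4 * j + m)), LongCycles s ∧
      (permBand s).permanent = 4 ^ j * (3 + (-1) ^ m) := by
  induction j with
  | zero =>
    obtain ⟨k, rfl⟩ := Nat.exists_eq_add_of_le' hm
    rw [mul_zero, zero_add]
    exact ⟨_, longCycles_finRotate k, by rw [permanent_permBand_finRotate, pow_zero, one_mul]⟩
  | succ j ih =>
    obtain ⟨s, hs, h⟩ := ih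
    let e : Fin 4 ⊕ Fin (4 * j + m) ≃ Fin (4 * (j + 1) + m) :=
      finSumFinEquiv.trans (finCongr (by ring))
    refine ⟨e.permCongr ((finRotate 4).sumCongr s), fun x => ?_, ?_⟩
    · obtain ⟨y | y, rfl⟩ := e.surjective x
      · simpa using longCycles_finRotate 1 y
      · simpa using hs y
    · rw [← permanent_permBand_congr e (s := (finRotate 4).sumCongr s) (by simp),
        permanent_permBand_sumCongr, h, permanent_permBand_finRotate 1]
      ring

theorem mem_LambdaHat_iff {n : ℕ} {A : Matrix (Fin n) (Fin n) ℝ} :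
    A ∈ LambdaHat n (-1) 2 1 ↔ ∃ s, LongCycles s ∧ A = permBand s := Iff.rfl

theorem stmt_17 (n : ℕ) :
    (4 ≤ n → Even n →
      {x : ℝ | ∃ A ∈ LambdaHat n (-1) 2 1, A.permanent = x} =
        {x : ℝ | ∃ j : ℕ, 1 ≤ j ∧ j ≤ n / 4 ∧ x = 4 ^ j}) ∧
    (3 ≤ n → Odd n →
      {x : ℝ | ∃ A ∈ LambdaHat n (-1) 2 1, A.permanent = x} =
        {x : ℝ | ∃ j : ℕ, j ≤ (n - 3) / 4 ∧ x = 2 * 4 ^ j}) := by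
  refine ⟨fun hn hpar => ?_, fun hn hpar => ?_⟩ <;> ext x <;>
    simp only [Set.mem_ofPred_eq, mem_LambdaHat_iff] <;> constructor
  · rintro ⟨_, ⟨s, hs, rfl⟩, rfl⟩
    obtain ⟨e, o, h, hle, ho, hpos⟩ := hs.exists_permanent_eq n (Fintype.card_fin n)
    obtain ⟨k, rfl⟩ : ∃ k, o = 2 * k := ⟨o / 2, by have := hpar.two_dvd; omega⟩
    refine ⟨e + k, by omega, by omega, ?_⟩
    rw [h, pow_mul, pow_add]
    norm_num
  · rintro ⟨j, h₁, hj, rfl⟩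
    obtain ⟨i, rfl⟩ := Nat.exists_eq_add_of_le' h₁
    obtain ⟨m, rfl⟩ := Nat.exists_eq_add_of_le (show 4 * i ≤ n by omega)
    obtain ⟨s, hs, h⟩ := exists_longCycles_permanent_eq i m (by omega)
    have hm : Even m := by have := hpar.two_dvd; exact even_iff_two_dvd.2 (by omega)
    refine ⟨_, ⟨s, hs, rfl⟩, ?_⟩
    rw [h, hm.neg_one_pow]
    ring
  · rintro ⟨_, ⟨s, hs, rfl⟩, rfl⟩
    obtain ⟨e, o, h, hle, ho, hpos⟩ := hs.exists_permanent_eq n (Fintype.card_fin n)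
    obtain ⟨k, rfl⟩ : ∃ k, o = 2 * k + 1 := ⟨o / 2, by have := Nat.odd_iff.1 hpar; omega⟩
    refine ⟨e + k, by omega, ?_⟩
    rw [h, pow_succ, pow_mul, pow_add]
    norm_num
    ring
  · rintro ⟨j, hj, rfl⟩
    obtain ⟨m, rfl⟩ := Nat.exists_eq_add_of_le (show 4 * j ≤ n by omega)
    obtain ⟨s, hs, h⟩ := exists_longCycles_permanent_eq j m (by omega)
    have hm : Odd m := by have := Nat.odd_iff.1 hpar; exact Nat.odd_iff.2 (by omega)
    refine ⟨_, ⟨s, hs, rfl⟩, ?_⟩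
    rw [h, hm.neg_one_pow]
    ring
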